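/- Let η_f, ε_f : f ⊣ f* : B → A be an adjunction in a 2-category K, and let C_f = (f f*, δ_f = f η_f f*, ε_f) be the associated B-coring. Then the assignment α ↦ α f ∘ f η_f defines a bijection γ from the set End_B(C_f, C_f) of coring endomorphisms of C_f to the set of coalgebra structures on the 1-cell f over the comonad G^A_{C_f} on K(A,B) (the comonad h ↦ f f* h induced by C_f); its inverse sends a coalgebra structure θ_f : f → f f* f to f f* ε_f ∘ θ_f f*. -/

import Mathlib

open CategoryTheory CategoryTheory.Bicategory

universe w v u

/-- The comultiplication `δ_f = f η_f f*` of the `B`-coring `C_f = f ⊗ f*` associated to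
an adjunction `f ⊣ f*` (in Lean conventions `f ⊗ f*` is `g ≫ f`). -/
def coringComul {K : Type u} [Bicategory.{w, v} K] {a b : K} (f : a ⟶ b) (g : b ⟶ a)
    (η : 𝟙 a ⟶ f ≫ g) : g ≫ f ⟶ (g ≫ f) ≫ g ≫ f :=
  (g ◁ ((λ_ f).inv ≫ (η ▷ f) ≫ (α_ f g f).hom)) ≫ (α_ g f (g ≫ f)).inv

/-!
Transposition along `f ⊣ f*` is a bijection between 2-cells `f f* → c` and 2-cells `f → c f`,
natural in `c`. It sends the counit `ε_f` to the identity of `f`, and the convolution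
`(τ ⊗ σ) ∘ δ_f` to the composite of the transpose of `τ` followed by the transpose of `σ`.
Hence compatibility of a 2-cell `f f* → c` with counits and comultiplications translates into the
counit and coassociativity laws for its transpose, whatever the target `c` is; the theorem is the
case `c = f f*`.
-/

section Transpose

variable {K : Type u} [Bicategory.{w, v} K] {a b d e : K} {f : a ⟶ b} {g : b ⟶ a}
  (adj : Bicategory.Adjunction f g)

lemma homEquiv₁_symm_comp {p : a ⟶ d} {h k : b ⟶ d} (σ : g ≫ p ⟶ h) (τ : h ⟶ k) :
    adj.homEquiv₁.symm (σ ≫ τ) = adj.homEquiv₁.symm σ ≫ f ◁ τ := by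
  simp only [Adjunction.homEquiv₁_symm_apply, whiskerLeft_comp, Category.assoc]

lemma homEquiv₁_comp {p q : a ⟶ d} {h : b ⟶ d} (φ : p ⟶ q) (θ : q ⟶ f ≫ h) :
    adj.homEquiv₁ (φ ≫ θ) = g ◁ φ ≫ adj.homEquiv₁ θ := by
  simp only [Adjunction.homEquiv₁_apply, whiskerLeft_comp, Category.assoc]

lemma homEquiv₁_symm_whiskerLeft_comp {p q : a ⟶ d} {h : b ⟶ d} (φ : p ⟶ q) (σ : g ≫ q ⟶ h) :
    adj.homEquiv₁.symm (g ◁ φ ≫ σ) = φ ≫ adj.homEquiv₁.symm σ := by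
  rw [Equiv.symm_apply_eq, homEquiv₁_comp, Equiv.apply_symm_apply]

lemma homEquiv₁_symm_whiskerRight {p : a ⟶ d} {h : b ⟶ d} (σ : g ≫ p ⟶ h) (k : d ⟶ e) :
    adj.homEquiv₁.symm ((α_ g p k).inv ≫ σ ▷ k) =
      adj.homEquiv₁.symm σ ▷ k ≫ (α_ f h k).hom := by
  simp only [Adjunction.homEquiv₁_symm_apply]
  bicategory

lemma homEquiv₁_symm_counit : adj.homEquiv₁.symm adj.counit = (ρ_ f).inv := by
  rw [Equiv.symm_apply_eq, Adjunction.homEquiv₁_apply]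
  bicategory

lemma coringComul_comp_whiskerLeft {h : b ⟶ b} (σ : g ≫ f ⟶ h) :
    coringComul f g adj.unit ≫ (g ≫ f) ◁ σ =
      g ◁ adj.homEquiv₁.symm σ ≫ (α_ g f h).inv := by
  simp only [coringComul, Adjunction.homEquiv₁_symm_apply, whiskerLeft_comp, Category.assoc,
    associator_inv_naturality_right]

-- Interchange lets `τ` act first; then `σ ▷ k` is a right whiskering, which transposition respects.
lemma homEquiv₁_symm_coringComul_comp {h k : b ⟶ b} (σ : g ≫ f ⟶ h) (τ : g ≫ f ⟶ k) :
    adj.homEquiv₁.symm (coringComul f g adj.unit ≫ σ ▷ (g ≫ f) ≫ h ◁ τ) =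
      adj.homEquiv₁.symm τ ≫ adj.homEquiv₁.symm σ ▷ k ≫ (α_ f h k).hom :=
  calc
    _ = adj.homEquiv₁.symm ((coringComul f g adj.unit ≫ (g ≫ f) ◁ τ) ≫ σ ▷ k) := by
      rw [← whisker_exchange, Category.assoc]
    _ = adj.homEquiv₁.symm (g ◁ adj.homEquiv₁.symm τ ≫ (α_ g f k).inv ≫ σ ▷ k) := by
      rw [coringComul_comp_whiskerLeft, Category.assoc]
    _ = adj.homEquiv₁.symm τ ≫ adj.homEquiv₁.symm σ ▷ k ≫ (α_ f h k).hom := by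
      rw [homEquiv₁_symm_whiskerLeft_comp, homEquiv₁_symm_whiskerRight]

variable {c : b ⟶ b} (σ : g ≫ f ⟶ c)

lemma comp_eq_counit_iff (counit : c ⟶ 𝟙 b) :
    σ ≫ counit = adj.counit ↔ adj.homEquiv₁.symm σ ≫ f ◁ counit ≫ (ρ_ f).hom = 𝟙 f := by
  rw [← adj.homEquiv₁.symm.apply_eq_iff_eq, homEquiv₁_symm_comp, homEquiv₁_symm_counit,
    ← Iso.comp_hom_eq_id, Category.assoc]

lemma comp_eq_coringComul_comp_iff (comul : c ⟶ c ≫ c) :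
    σ ≫ comul = coringComul f g adj.unit ≫ σ ▷ (g ≫ f) ≫ c ◁ σ ↔
      adj.homEquiv₁.symm σ ≫ f ◁ comul ≫ (α_ f c c).inv =
        adj.homEquiv₁.symm σ ≫ adj.homEquiv₁.symm σ ▷ c := by
  rw [← adj.homEquiv₁.symm.apply_eq_iff_eq, homEquiv₁_symm_comp, homEquiv₁_symm_coringComul_comp,
    ← Category.assoc, ← Category.assoc, ← Iso.comp_inv_eq, Category.assoc]

end Transpose

theorem stmt_12_general {K : Type u} [Bicategory.{w, v} K] {a b : K}
    (f : a ⟶ b) (g : b ⟶ a) (adj : Bicategory.Adjunction f g)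
    {c : b ⟶ b} (counit : c ⟶ 𝟙 b) (comul : c ⟶ c ≫ c) :
    ∃ e : {σ : g ≫ f ⟶ c //
            σ ≫ counit = adj.counit ∧
            σ ≫ comul = coringComul f g adj.unit ≫ (σ ▷ (g ≫ f)) ≫ (c ◁ σ)} ≃
          {θ : f ⟶ f ≫ c //
            θ ≫ (f ◁ counit) ≫ (ρ_ f).hom = 𝟙 f ∧
            θ ≫ (f ◁ comul) ≫ (α_ f c c).inv = θ ≫ (θ ▷ c)},
      (∀ σ, (e σ).1 =
        (λ_ f).inv ≫ (adj.unit ▷ f) ≫ (α_ f g f).hom ≫ (f ◁ σ.1)) ∧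
      (∀ θ, (e.symm θ).1 =
        (g ◁ θ.1) ≫ (α_ g f c).inv ≫ (adj.counit ▷ c) ≫ (λ_ c).hom) :=
  ⟨adj.homEquiv₁.symm.subtypeEquiv fun σ =>
      and_congr (comp_eq_counit_iff adj σ counit) (comp_eq_coringComul_comp_iff adj σ comul),
    fun σ => adj.homEquiv₁_symm_apply σ.1, fun θ => adj.homEquiv₁_apply θ.1⟩

/-- Let `η_f, ε_f : f ⊣ f* : B → A` be an adjunction in a 2-category
`K`, and `C_f = (f f*, δ_f = f η_f f*, ε_f)` the associated `B`-coring.  Then the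
assignment `α ↦ α f ∘ f η_f` defines a bijection `γ` from the set `End_B(C_f, C_f)` of
coring endomorphisms of `C_f` to the set of coalgebra structures on the 1-cell `f` over
the comonad `G^A_{C_f} : h ↦ f f* h` induced by `C_f` on `K(A,B)`; its inverse sends a
coalgebra structure `θ : f → f f* f` to `f f* ε_f ∘ θ f*`. -/
theorem stmt_12 {K : Type u} [Bicategory.{w, v} K] [Bicategory.Strict K] {a b : K}
    (f : a ⟶ b) (g : b ⟶ a) (adj : Bicategory.Adjunction f g) :
    ∃ e : {σ : g ≫ f ⟶ g ≫ f //
            σ ≫ adj.counit = adj.counit ∧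
            σ ≫ coringComul f g adj.unit =
              coringComul f g adj.unit ≫ (σ ▷ (g ≫ f)) ≫ ((g ≫ f) ◁ σ)} ≃
          {θ : f ⟶ f ≫ g ≫ f //
            θ ≫ (f ◁ adj.counit) ≫ (ρ_ f).hom = 𝟙 f ∧
            θ ≫ (f ◁ coringComul f g adj.unit) ≫ (α_ f (g ≫ f) (g ≫ f)).inv =
              θ ≫ (θ ▷ (g ≫ f))},
      (∀ σ, (e σ).1 =
        (λ_ f).inv ≫ (adj.unit ▷ f) ≫ (α_ f g f).hom ≫ (f ◁ σ.1)) ∧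
      (∀ θ, (e.symm θ).1 =
        (g ◁ θ.1) ≫ (α_ g f (g ≫ f)).inv ≫ (adj.counit ▷ (g ≫ f)) ≫
          (λ_ (g ≫ f)).hom) :=
  stmt_12_general f g adj adj.counit (coringComul f g adj.unit)
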